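/- Let ν ∈ ℂ with Re ν > −1 and let φ ∈ 𝒮⁺. Then for every x > 0 one has the inversion formula 𝓗_ν(𝓗_ν(φ))(x) = φ(x). -/

import Mathlib

open MeasureTheory Filter Set

noncomputable def besselJ (ν : ℂ) (z : ℝ) : ℂ :=
  ∑' k : ℕ, ((-1 : ℂ) ^ k / (Complex.Gamma (k + 1) * Complex.Gamma (ν + k + 1))) *
    ((z : ℂ) / 2) ^ (2 * (k : ℂ) + ν)

noncomputable def hankel (ν : ℂ) (φ : ℝ → ℂ) (x : ℝ) : ℂ :=
  (x : ℂ) ^ (-ν) * ∫ y in Ioi (0:ℝ), φ y * besselJ ν (x * y) * (y : ℂ) ^ (ν + 1)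

noncomputable def DIter : ℕ → (ℝ → ℂ) → (ℝ → ℂ)
  | 0, φ => φ
  | k + 1, φ => fun x => (1 / (x : ℂ)) * deriv (DIter k φ) x

def SPlus (φ : ℝ → ℂ) : Prop :=
  ContDiffOn ℝ (⊤ : ℕ∞) φ (Ioi 0) ∧
  ∀ m k : ℕ, ∃ C : ℝ, ∀ x > (0:ℝ), ‖(x : ℂ) ^ m * DIter k φ x‖ ≤ C

/-!
After the substitutions `s = y² / 2` and `t = x² / 2`, the modified Hankel transform becomes the
transform `T` with kernel the Bessel–Clifford function of `t s` and weight `s ^ ν`. This kernel is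
entire, and an energy estimate for its differential equation bounds it on the half-line. `T` turns
the Bessel operator into multiplication, so it maps functions all of whose derivatives decay rapidly
to rapidly decaying functions.

By Fubini, `T` is symmetric for the pairing with weight `s ^ ν`, and it sends `exp (-a s)` to
`a ^ (-(ν + 1)) exp (-s / a)`, so `T` is an involution on exponentials. Moving `T` twice onto an
exponential shows that `T (T f)` and `f` have the same weighted Laplace transform, and the Laplace
transform is injective.
-/

/-- The Taylor coefficients at `0` of the Bessel–Clifford function of order `ν`. -/
noncomputable def besselCliffordCoeff (ν : ℂ) (k : ℕ) : ℂ :=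
  (-1 : ℂ) ^ k / (Complex.Gamma (k + 1) * Complex.Gamma (ν + k + 1))

theorem besselCliffordCoeff_eq_mul_add_one (ν : ℂ) (k : ℕ) :
    besselCliffordCoeff ν k = (ν + k + 1) * besselCliffordCoeff (ν + 1) k := by
  have hΓ := Complex.one_div_Gamma_eq_self_mul_one_div_Gamma_add_one (ν + k + 1)
  simp only [besselCliffordCoeff, div_eq_mul_inv, mul_inv]
  rw [hΓ, show ν + 1 + k + 1 = ν + k + 1 + 1 by ring]
  ring

theorem add_one_mul_besselCliffordCoeff_succ (ν : ℂ) (k : ℕ) :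
    (k + 1) * besselCliffordCoeff ν (k + 1) = -besselCliffordCoeff (ν + 1) k := by
  have hΓ := Complex.one_div_Gamma_eq_self_mul_one_div_Gamma_add_one (k + 1)
  simp only [besselCliffordCoeff, div_eq_mul_inv, mul_inv, Nat.cast_succ, pow_succ]
  rw [hΓ, show ν + (k + 1) + 1 = ν + 1 + k + 1 by ring]
  ring

theorem norm_natCast_add_one (k : ℕ) : ‖(k + 1 : ℂ)‖ = k + 1 := by
  exact_mod_cast Complex.norm_natCast (k + 1)

theorem summable_norm_besselCliffordCoeff_mul_pow (ν : ℂ) (r : ℝ) :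
    Summable fun k : ℕ ↦ ‖besselCliffordCoeff ν k‖ * r ^ k := by
  refine summable_of_ratio_norm_eventually_le (r := 1 / 2) (by norm_num) ?_
  filter_upwards [tendsto_natCast_atTop_atTop.eventually_ge_atTop (2 * |r|),
    tendsto_natCast_atTop_atTop.eventually_ge_atTop ‖ν‖] with k hr hν
  have hratio : ‖besselCliffordCoeff ν k‖ =
      ‖ν + k + 1‖ * ((k + 1) * ‖besselCliffordCoeff ν (k + 1)‖) := by
    have h := congrArg norm (add_one_mul_besselCliffordCoeff_succ ν k)
    rw [norm_neg, norm_mul, norm_natCast_add_one] at h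
    rw [besselCliffordCoeff_eq_mul_add_one, norm_mul, ← h]
  have hlower : 1 ≤ ‖ν + k + 1‖ := by
    have h := norm_le_add_norm_add (k + 1 : ℂ) ν
    rw [norm_natCast_add_one, add_comm (k + 1 : ℂ), ← add_assoc] at h
    linarith
  simp only [norm_mul, abs_norm, norm_pow, Real.norm_eq_abs]
  rw [hratio]
  calc ‖besselCliffordCoeff ν (k + 1)‖ * |r| ^ (k + 1)
      = 1 / 2 * (1 * (2 * |r| * ‖besselCliffordCoeff ν (k + 1)‖)) * |r| ^ k := by ring
    _ ≤ 1 / 2 * (‖ν + k + 1‖ * ((k + 1) * ‖besselCliffordCoeff ν (k + 1)‖)) * |r| ^ k := by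
      gcongr
      linarith
    _ = 1 / 2 * (‖ν + k + 1‖ * ((k + 1) * ‖besselCliffordCoeff ν (k + 1)‖) * |r| ^ k) := by ring

/-- The Bessel–Clifford function, the entire function with
`J_ν(z) = (z / 2) ^ ν * besselClifford ν (z² / 4)`. -/
noncomputable def besselClifford (ν z : ℂ) : ℂ :=
  ∑' k : ℕ, besselCliffordCoeff ν k * z ^ k

theorem hasSum_besselClifford (ν z : ℂ) :
    HasSum (fun k : ℕ ↦ besselCliffordCoeff ν k * z ^ k) (besselClifford ν z) := by
  refine (Summable.of_norm ?_).hasSum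
  simpa using summable_norm_besselCliffordCoeff_mul_pow ν ‖z‖

theorem norm_besselCliffordCoeff_mul_pow_le (ν : ℂ) (k : ℕ) {w : ℂ} {r : ℝ}
    (hw : w ∈ Metric.ball 0 r) :
    ‖besselCliffordCoeff ν k * w ^ k‖ ≤ ‖besselCliffordCoeff ν k‖ * r ^ k := by
  rw [norm_mul, norm_pow]
  gcongr
  exact (mem_ball_zero_iff.1 hw).le

theorem differentiable_besselClifford (ν : ℂ) : Differentiable ℂ (besselClifford ν) := fun z ↦
  (Complex.differentiableOn_tsum_of_summable_norm
    (summable_norm_besselCliffordCoeff_mul_pow ν (‖z‖ + 1)) (fun k ↦ by fun_prop)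
    Metric.isOpen_ball fun k _ ↦ norm_besselCliffordCoeff_mul_pow_le ν k).differentiableAt
    (Metric.isOpen_ball.mem_nhds (by simp))

theorem hasSum_deriv_besselClifford (ν z : ℂ) :
    HasSum (fun k : ℕ ↦ besselCliffordCoeff ν k * (k * z ^ (k - 1)))
      (deriv (besselClifford ν) z) := by
  have h := Complex.hasSum_deriv_of_summable_norm (z := z)
    (summable_norm_besselCliffordCoeff_mul_pow ν (‖z‖ + 1)) (fun k ↦ by fun_prop)
    Metric.isOpen_ball (fun k _ ↦ norm_besselCliffordCoeff_mul_pow_le ν k) (by simp)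
  simp only [deriv_const_mul_field', deriv_pow_field] at h
  exact h

theorem besselClifford_zero (ν : ℂ) : besselClifford ν 0 = (Complex.Gamma (ν + 1))⁻¹ := by
  rw [besselClifford, tsum_eq_single 0 fun k hk ↦ by simp [hk]]
  simp [besselCliffordCoeff]

theorem deriv_besselClifford (ν z : ℂ) :
    deriv (besselClifford ν) z = -besselClifford (ν + 1) z := by
  have h := (hasSum_nat_add_iff' 1).2 (hasSum_deriv_besselClifford ν z)
  rw [Finset.sum_range_one, Nat.cast_zero, zero_mul, mul_zero, sub_zero] at h
  refine h.unique ((hasSum_besselClifford (ν + 1) z).neg.congr_fun fun k ↦ ?_)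
  rw [Nat.add_sub_cancel, Nat.cast_succ, ← neg_mul, ← add_one_mul_besselCliffordCoeff_succ]
  ring

theorem hasDerivAt_besselClifford (ν z : ℂ) :
    HasDerivAt (besselClifford ν) (-besselClifford (ν + 1) z) z :=
  deriv_besselClifford ν z ▸ (differentiable_besselClifford ν z).hasDerivAt

theorem continuous_besselClifford (ν : ℂ) : Continuous (besselClifford ν) :=
  (differentiable_besselClifford ν).continuous

theorem besselClifford_eq_sub (ν z : ℂ) :
    besselClifford ν z = (ν + 1) * besselClifford (ν + 1) z - z * besselClifford (ν + 2) z := by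
  have hderiv := (hasSum_deriv_besselClifford (ν + 1) z).mul_left z
  rw [deriv_besselClifford, show ν + 1 + 1 = ν + 2 by ring] at hderiv
  refine (hasSum_besselClifford ν z).unique ?_
  convert! ((hasSum_besselClifford (ν + 1) z).mul_left (ν + 1)).add hderiv using 1
  · funext k
    rw [besselCliffordCoeff_eq_mul_add_one]
    rcases k with - | k
    · simp
    · rw [Nat.add_sub_cancel]; ring
  · ring

theorem hasDerivAt_besselClifford_ofReal (ν : ℂ) (u : ℝ) :
    HasDerivAt (fun u : ℝ ↦ besselClifford ν u) (-besselClifford (ν + 1) u) u :=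
  (hasDerivAt_besselClifford ν u).comp_ofReal

/-- The energy of the Bessel–Clifford function, which decreases along `(0, ∞)` when
`-1 / 2 ≤ Re ν` and thereby bounds the function there. -/
noncomputable def besselCliffordEnergy (ν : ℂ) (u : ℝ) : ℝ :=
  ‖besselClifford ν u‖ ^ 2 + u * ‖besselClifford (ν + 1) u‖ ^ 2

theorem hasDerivAt_besselCliffordEnergy (ν : ℂ) (u : ℝ) :
    HasDerivAt (besselCliffordEnergy ν)
      (-(2 * ν.re + 1) * ‖besselClifford (ν + 1) u‖ ^ 2) u := by
  convert! (hasDerivAt_besselClifford_ofReal ν u).norm_sq.add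
    ((hasDerivAt_id u).mul (hasDerivAt_besselClifford_ofReal (ν + 1) u).norm_sq) using 1
  rw [besselClifford_eq_sub ν, show ν + 1 + 1 = ν + 2 by ring]
  simp only [Complex.inner, ← Complex.normSq_eq_norm_sq, Complex.normSq_apply, id]
  simp only [neg_add_rev, map_sub, map_mul, map_add, map_one, Complex.conj_ofReal, neg_mul,
    Complex.neg_re, Complex.mul_re, Complex.sub_re, Complex.add_re, Complex.conj_re, Complex.one_re,
    Complex.add_im, Complex.conj_im, Complex.one_im, add_zero, mul_neg, neg_neg, Complex.ofReal_re,
    Complex.ofReal_im, zero_mul, neg_zero, sub_zero, Complex.sub_im, Complex.mul_im,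
    sub_neg_eq_add, neg_sub, one_mul]
  ring

theorem antitone_besselCliffordEnergy {ν : ℂ} (hν : -(1 / 2) ≤ ν.re) :
    Antitone (besselCliffordEnergy ν) := by
  refine antitone_of_hasDerivAt_nonpos (hasDerivAt_besselCliffordEnergy ν) fun u ↦ ?_
  exact mul_nonpos_of_nonpos_of_nonneg (by linarith) (sq_nonneg _)

theorem norm_besselClifford_ofReal_le {ν : ℂ} (hν : -(1 / 2) ≤ ν.re) {u : ℝ} (hu : 0 ≤ u) :
    ‖besselClifford ν u‖ ≤ ‖besselClifford ν 0‖ := by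
  refine le_of_sq_le_sq ?_ (norm_nonneg _)
  calc ‖besselClifford ν u‖ ^ 2 ≤ besselCliffordEnergy ν u :=
        le_add_of_nonneg_right (by positivity)
    _ ≤ besselCliffordEnergy ν 0 := antitone_besselCliffordEnergy hν hu
    _ = ‖besselClifford ν 0‖ ^ 2 := by simp [besselCliffordEnergy]

theorem exists_norm_besselClifford_ofReal_le {ν : ℂ} (hν : -(3 / 2) ≤ ν.re) :
    ∃ C, 0 ≤ C ∧ ∀ u : ℝ, 0 ≤ u → ‖besselClifford ν u‖ ≤ C * (1 + u) := by
  let A := ‖ν + 1‖ * ‖besselClifford (ν + 1) 0‖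
  let B := ‖besselClifford (ν + 2) 0‖
  refine ⟨A + B, by positivity, fun u hu ↦ ?_⟩
  have hA : ‖(ν + 1) * besselClifford (ν + 1) u‖ ≤ A := by
    rw [norm_mul]
    exact mul_le_mul_of_nonneg_left
      (norm_besselClifford_ofReal_le (by norm_num; linarith) hu) (norm_nonneg _)
  have hB : ‖u * besselClifford (ν + 2) u‖ ≤ u * B := by
    rw [norm_mul, Complex.norm_of_nonneg hu]
    exact mul_le_mul_of_nonneg_left (norm_besselClifford_ofReal_le (by norm_num; linarith) hu) hu
  calc ‖besselClifford ν u‖ ≤ A + u * B := by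
        rw [besselClifford_eq_sub]
        exact (norm_sub_le _ _).trans (add_le_add hA hB)
    _ ≤ (A + u * B) + (A * u + B) := le_add_of_nonneg_right (by positivity)
    _ = (A + B) * (1 + u) := by ring

theorem exists_norm_besselClifford_mul_le {ν : ℂ} (hν : -(3 / 2) ≤ ν.re) :
    ∃ C, 0 ≤ C ∧ ∀ t s : ℝ, 0 ≤ t → 0 ≤ s →
      ‖besselClifford ν (t * s : ℝ)‖ ≤ C * (1 + t) * (1 + s) := by
  obtain ⟨C, hC₀, hC⟩ := exists_norm_besselClifford_ofReal_le hν
  refine ⟨C, hC₀, fun t s ht hs ↦ (hC _ (by positivity)).trans ?_⟩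
  rw [mul_assoc C (1 + t)]
  gcongr
  linarith

/-- Continuous functions on `(0, ∞)` that are bounded near `0` and decay rapidly at infinity;
nothing is required on `(-∞, 0]`. -/
structure RapidDecay (f : ℝ → ℂ) : Prop where
  continuousOn : ContinuousOn f (Ioi 0)
  bound : ∀ m : ℕ, ∃ C : ℝ, ∀ s > (0 : ℝ), s ^ m * ‖f s‖ ≤ C

theorem re_add_one_pos {ν : ℂ} (hν : -1 < ν.re) : 0 < (ν + 1).re := by
  rw [Complex.add_re, Complex.one_re]
  linarith

theorem norm_one_add_ofReal {s : ℝ} (hs : 0 ≤ s) : ‖(1 + s : ℂ)‖ = 1 + s := by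
  exact_mod_cast Complex.norm_of_nonneg (add_nonneg zero_le_one hs)

namespace RapidDecay

theorem mul_of_norm_le {f g : ℝ → ℂ} (hf : RapidDecay f) (hg : ContinuousOn g (Ioi 0)) {C : ℝ}
    (hC : ∀ s > (0 : ℝ), ‖g s‖ ≤ C * (1 + s)) : RapidDecay fun s ↦ f s * g s := by
  refine ⟨hf.continuousOn.mul hg, fun m ↦ ?_⟩
  obtain ⟨A, hA⟩ := hf.bound m
  obtain ⟨B, hB⟩ := hf.bound (m + 1)
  have hC₀ : 0 ≤ C := nonneg_of_mul_nonneg_left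
    ((norm_nonneg _).trans (hC 1 one_pos)) (by norm_num)
  refine ⟨C * (A + B), fun s hs ↦ ?_⟩
  calc s ^ m * ‖f s * g s‖ ≤ s ^ m * (‖f s‖ * (C * (1 + s))) := by
        rw [norm_mul]; gcongr; exact hC s hs
    _ = C * (s ^ m * ‖f s‖ + s ^ (m + 1) * ‖f s‖) := by ring
    _ ≤ C * (A + B) := by gcongr; exacts [hA s hs, hB s hs]

theorem add {f g : ℝ → ℂ} (hf : RapidDecay f) (hg : RapidDecay g) :
    RapidDecay fun s ↦ f s + g s := by
  refine ⟨hf.continuousOn.add hg.continuousOn, fun m ↦ ?_⟩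
  obtain ⟨A, hA⟩ := hf.bound m
  obtain ⟨B, hB⟩ := hg.bound m
  refine ⟨A + B, fun s hs ↦ ?_⟩
  calc s ^ m * ‖f s + g s‖ ≤ s ^ m * ‖f s‖ + s ^ m * ‖g s‖ := by
        rw [← mul_add]; gcongr; exact norm_add_le _ _
    _ ≤ A + B := add_le_add (hA s hs) (hB s hs)

theorem const_mul {f : ℝ → ℂ} (hf : RapidDecay f) (c : ℂ) : RapidDecay fun s ↦ c * f s := by
  refine ⟨hf.continuousOn.const_mul c, fun m ↦ ?_⟩
  obtain ⟨A, hA⟩ := hf.bound m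
  refine ⟨‖c‖ * A, fun s hs ↦ ?_⟩
  rw [norm_mul, mul_left_comm]
  gcongr
  exact hA s hs

theorem mul_one_add {f : ℝ → ℂ} (hf : RapidDecay f) : RapidDecay fun s ↦ f s * (1 + s : ℂ) :=
  hf.mul_of_norm_le (C := 1) (by fun_prop) fun s hs ↦ by rw [norm_one_add_ofReal hs.le, one_mul]

theorem ofReal_mul {f : ℝ → ℂ} (hf : RapidDecay f) : RapidDecay fun s ↦ (s : ℂ) * f s := by
  refine ⟨Complex.continuous_ofReal.continuousOn.mul hf.continuousOn, fun m ↦ ?_⟩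
  obtain ⟨A, hA⟩ := hf.bound (m + 1)
  refine ⟨A, fun s hs ↦ ?_⟩
  rw [norm_mul, Complex.norm_of_nonneg hs.le, ← mul_assoc, ← pow_succ]
  exact hA s hs

theorem mul_besselClifford {f : ℝ → ℂ} (hf : RapidDecay f) {ν : ℂ} (hν : -(3 / 2) ≤ ν.re)
    {t : ℝ} (ht : 0 ≤ t) : RapidDecay fun s ↦ f s * besselClifford ν (t * s : ℝ) := by
  obtain ⟨C, -, hC⟩ := exists_norm_besselClifford_mul_le hν
  have hcont : Continuous fun s : ℝ ↦ besselClifford ν (t * s : ℝ) :=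
    (continuous_besselClifford ν).comp (by fun_prop)
  exact hf.mul_of_norm_le hcont.continuousOn fun s hs ↦ hC t s ht hs.le

theorem isBigO_atTop {f : ℝ → ℂ} (hf : RapidDecay f) (m : ℕ) :
    f =O[atTop] fun s : ℝ ↦ s ^ (-(m : ℝ)) := by
  obtain ⟨C, hC⟩ := hf.bound m
  refine Asymptotics.IsBigO.of_bound C ?_
  filter_upwards [eventually_gt_atTop 0] with s hs
  rw [Real.norm_of_nonneg (by positivity), Real.rpow_neg hs.le, Real.rpow_natCast,
    ← div_eq_mul_inv, le_div_iff₀ (by positivity), mul_comm]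
  exact hC s hs

theorem isBigO_zero {f : ℝ → ℂ} (hf : RapidDecay f) :
    f =O[nhdsWithin 0 (Ioi 0)] fun s : ℝ ↦ s ^ (-(0 : ℝ)) := by
  obtain ⟨C, hC⟩ := hf.bound 0
  refine Asymptotics.IsBigO.of_bound C ?_
  filter_upwards [self_mem_nhdsWithin] with s hs
  simpa using hC s hs

theorem integrableOn {f : ℝ → ℂ} (hf : RapidDecay f) {ν : ℂ} (hν : -1 < ν.re) :
    IntegrableOn (fun s : ℝ ↦ f s * (s : ℂ) ^ ν) (Ioi 0) := by
  obtain ⟨m, hm⟩ := exists_nat_gt (ν + 1).re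
  have hmellin := mellinConvergent_of_isBigO_rpow (s := ν + 1)
    (hf.continuousOn.locallyIntegrableOn measurableSet_Ioi) (hf.isBigO_atTop m) hm
    hf.isBigO_zero (re_add_one_pos hν)
  simpa [MellinConvergent, mul_comm] using hmellin

theorem tendsto_mul_cpow_zero {f : ℝ → ℂ} (hf : RapidDecay f) {μ : ℂ} (hμ : 0 < μ.re) :
    Tendsto (fun s : ℝ ↦ f s * (s : ℂ) ^ μ) (nhdsWithin 0 (Ioi 0)) (nhds 0) := by
  have hcpow := (Complex.continuousAt_ofReal_cpow_const 0 μ (Or.inl hμ)).tendsto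
  rw [Complex.ofReal_zero, Complex.zero_cpow (by rintro rfl; simp at hμ)] at hcpow
  refine (hf.isBigO_zero.mul (Asymptotics.isBigO_refl (fun s : ℝ ↦ (s : ℂ) ^ μ) _).norm_right)
    |>.trans_tendsto ?_
  simpa using (hcpow.mono_left nhdsWithin_le_nhds).norm

theorem tendsto_mul_cpow_atTop {f : ℝ → ℂ} (hf : RapidDecay f) (μ : ℂ) :
    Tendsto (fun s : ℝ ↦ f s * (s : ℂ) ^ μ) atTop (nhds 0) := by
  obtain ⟨m, hm⟩ := exists_nat_gt μ.re
  have hpow : Tendsto (fun s : ℝ ↦ s ^ (-(m - μ.re))) atTop (nhds 0) :=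
    tendsto_rpow_neg_atTop (sub_pos.2 hm)
  refine ((hf.isBigO_atTop m).mul (Asymptotics.isBigO_refl (fun s : ℝ ↦ (s : ℂ) ^ μ) _).norm_right)
    |>.trans_tendsto (hpow.congr' ?_)
  filter_upwards [eventually_gt_atTop 0] with s hs
  rw [Complex.norm_cpow_eq_rpow_re_of_pos hs, ← Real.rpow_add hs]
  ring_nf

end RapidDecay

theorem rapidDecay_cexp {a : ℂ} (ha : 0 < a.re) :
    RapidDecay fun s : ℝ ↦ Complex.exp (-(a * s)) := by
  refine ⟨by fun_prop, fun m ↦ ⟨m.factorial / a.re ^ m, fun s hs ↦ ?_⟩⟩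
  have hnorm : ‖Complex.exp (-(a * s))‖ = (Real.exp (a.re * s))⁻¹ := by
    rw [Complex.norm_exp, ← Real.exp_neg]; simp
  have hexp := Real.pow_div_factorial_le_exp (a.re * s) (by positivity) m
  rw [div_le_iff₀ (by positivity)] at hexp
  rw [hnorm, ← div_eq_mul_inv, div_le_div_iff₀ (Real.exp_pos _) (by positivity)]
  calc s ^ m * a.re ^ m = (a.re * s) ^ m := by ring
    _ ≤ Real.exp (a.re * s) * m.factorial := hexp
    _ = m.factorial * Real.exp (a.re * s) := mul_comm _ _

/-- The Hankel–Clifford transform: the modified Hankel transform of order `ν` in the variables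
`s = y² / 2` and `t = x² / 2`, for which the kernel is entire in `t * s`. -/
noncomputable def hankelClifford (ν : ℂ) (f : ℝ → ℂ) (t : ℝ) : ℂ :=
  ∫ s in Ioi (0 : ℝ), f s * besselClifford ν (t * s : ℝ) * (s : ℂ) ^ ν

theorem hankelClifford_congr {ν : ℂ} {f g : ℝ → ℂ} (h : EqOn f g (Ioi 0)) :
    hankelClifford ν f = hankelClifford ν g :=
  funext fun _ ↦ setIntegral_congr_fun measurableSet_Ioi fun s hs ↦ by simp only [h hs]

theorem hankelClifford_const_mul (ν c : ℂ) (f : ℝ → ℂ) (t : ℝ) :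
    hankelClifford ν (fun s ↦ c * f s) t = c * hankelClifford ν f t := by
  simp only [hankelClifford, mul_assoc, integral_const_mul]

theorem hankelClifford_zero (ν : ℂ) (f : ℝ → ℂ) :
    hankelClifford ν f 0 = (Complex.Gamma (ν + 1))⁻¹ * ∫ s in Ioi (0 : ℝ), f s * (s : ℂ) ^ ν := by
  simp only [hankelClifford, zero_mul, Complex.ofReal_zero, besselClifford_zero,
    mul_right_comm _ _ ((_ : ℂ) ^ ν), integral_mul_const]
  exact mul_comm _ _

theorem exists_norm_hankelClifford_integrand_le {ν : ℂ} (hν : -(3 / 2) ≤ ν.re) :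
    ∃ C, 0 ≤ C ∧ ∀ (f : ℝ → ℂ) (t s : ℝ), 0 ≤ t → 0 ≤ s →
      ‖f s * besselClifford ν (t * s : ℝ) * (s : ℂ) ^ ν‖ ≤
        C * (1 + t) * ‖f s * (1 + s : ℂ) * (s : ℂ) ^ ν‖ := by
  obtain ⟨C, hC₀, hC⟩ := exists_norm_besselClifford_mul_le hν
  refine ⟨C, hC₀, fun f t s ht hs ↦ ?_⟩
  simp only [norm_mul, norm_one_add_ofReal hs]
  calc ‖f s‖ * ‖besselClifford ν (t * s : ℝ)‖ * ‖(s : ℂ) ^ ν‖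
      ≤ ‖f s‖ * (C * (1 + t) * (1 + s)) * ‖(s : ℂ) ^ ν‖ := by gcongr; exact hC t s ht hs
    _ = C * (1 + t) * (‖f s‖ * (1 + s) * ‖(s : ℂ) ^ ν‖) := by ring

theorem hasDerivAt_besselClifford_mul_cpow (ν : ℂ) (t : ℝ) {s : ℝ} (hs : 0 < s) :
    HasDerivAt (fun s : ℝ ↦ besselClifford (ν + 1) (t * s : ℝ) * (s : ℂ) ^ (ν + 1))
      (besselClifford ν (t * s : ℝ) * (s : ℂ) ^ ν) s := by
  have hs₀ : (s : ℂ) ≠ 0 := Complex.ofReal_ne_zero.2 hs.ne'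
  have hE : HasDerivAt (fun z : ℂ ↦ besselClifford (ν + 1) (t * z))
      (-besselClifford (ν + 1 + 1) (t * s) * t) s :=
    (hasDerivAt_besselClifford (ν + 1) _).comp _ (hasDerivAt_const_mul _)
  have hpow : HasDerivAt (fun z : ℂ ↦ z ^ (ν + 1)) ((ν + 1) * (s : ℂ) ^ ν) s := by
    simpa using (hasDerivAt_id (s : ℂ)).cpow_const (c := ν + 1) (Complex.ofReal_mem_slitPlane.2 hs)
  convert! (hE.mul hpow).comp_ofReal using 1
  · simp
  · rw [Complex.ofReal_mul, besselClifford_eq_sub ν, show ν + 1 + 1 = ν + 2 by ring,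
      Complex.cpow_add _ _ hs₀, Complex.cpow_one]
    ring

namespace RapidDecay

variable {f : ℝ → ℂ} {ν : ℂ}

theorem integrableOn_mul_besselClifford (hf : RapidDecay f) (hν : -1 < ν.re) {t : ℝ}
    (ht : 0 ≤ t) :
    IntegrableOn (fun s : ℝ ↦ f s * besselClifford ν (t * s : ℝ) * (s : ℂ) ^ ν) (Ioi 0) :=
  (hf.mul_besselClifford (by linarith) ht).integrableOn hν

theorem exists_norm_hankelClifford_le (hf : RapidDecay f) (hν : -1 < ν.re) :
    ∃ C, ∀ t, 0 ≤ t → ‖hankelClifford ν f t‖ ≤ C * (1 + t) := by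
  obtain ⟨C, -, hC⟩ := exists_norm_hankelClifford_integrand_le (ν := ν) (by linarith)
  refine ⟨C * ∫ s in Ioi (0 : ℝ), ‖f s * (1 + s : ℂ) * (s : ℂ) ^ ν‖, fun t ht ↦ ?_⟩
  rw [mul_right_comm, ← integral_const_mul]
  exact norm_integral_le_of_norm_le ((hf.mul_one_add.integrableOn hν).norm.const_mul _)
    (ae_restrict_of_forall_mem measurableSet_Ioi fun s hs ↦ hC f t s ht (le_of_lt hs))

theorem continuousOn_hankelClifford (hf : RapidDecay f) (hν : -1 < ν.re) :
    ContinuousOn (hankelClifford ν f) (Ici 0) := by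
  obtain ⟨C, hC₀, hC⟩ := exists_norm_hankelClifford_integrand_le (ν := ν) (by linarith)
  intro t _
  refine continuousWithinAt_of_dominated
    (bound := fun s ↦ C * (1 + (t + 1)) * ‖f s * (1 + s : ℂ) * (s : ℂ) ^ ν‖) ?_ ?_
    ((hf.mul_one_add.integrableOn hν).norm.const_mul _) ?_
  · filter_upwards [self_mem_nhdsWithin] with u hu
    exact (hf.integrableOn_mul_besselClifford hν hu).aestronglyMeasurable
  · filter_upwards [self_mem_nhdsWithin, nhdsWithin_le_nhds (Iio_mem_nhds (lt_add_one t))]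
      with u hu hut
    refine ae_restrict_of_forall_mem measurableSet_Ioi fun s hs ↦
      (hC f u s hu (le_of_lt hs)).trans ?_
    gcongr
    exact le_of_lt hut
  · refine Eventually.of_forall fun s ↦ Continuous.continuousWithinAt ?_
    exact (continuous_const.mul ((continuous_besselClifford ν).comp (by fun_prop))).mul
      continuous_const

theorem hasDerivAt_hankelClifford (hf : RapidDecay f) (hν : -1 < ν.re) {t : ℝ} (ht : 0 < t) :
    HasDerivAt (hankelClifford ν f) (-hankelClifford (ν + 1) f t) t := by
  have hν₁ : -1 < (ν + 1).re := neg_one_lt_zero.trans (re_add_one_pos hν)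
  have hderiv : ∀ s ∈ Ioi (0 : ℝ), ∀ u : ℝ,
      HasDerivAt (fun u : ℝ ↦ f s * besselClifford ν (u * s : ℝ) * (s : ℂ) ^ ν)
        (-(f s * besselClifford (ν + 1) (u * s : ℝ) * (s : ℂ) ^ (ν + 1))) u := fun s hs u ↦ by
    have hE := (hasDerivAt_besselClifford_ofReal ν (u * s)).scomp u
      ((hasDerivAt_id u).mul_const s)
    convert! (hE.const_mul (f s)).mul_const ((s : ℂ) ^ ν) using 1
    rw [Complex.cpow_add _ _ (Complex.ofReal_ne_zero.2 (ne_of_gt hs)), Complex.cpow_one,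
      Complex.real_smul]
    push_cast
    ring
  have h := (hasDerivAt_integral_of_dominated_loc_of_deriv_le (μ := volume.restrict (Ioi 0))
    (F := fun u s ↦ f s * besselClifford ν (u * s : ℝ) * (s : ℂ) ^ ν)
    (bound := fun s : ℝ ↦ ‖besselClifford (ν + 1) 0‖ * ‖f s * (s : ℂ) ^ (ν + 1)‖)
    (Ioi_mem_nhds ht) ?_ (hf.integrableOn_mul_besselClifford hν ht.le)
    (hf.integrableOn_mul_besselClifford hν₁ ht.le).neg.aestronglyMeasurable ?_
    ((hf.integrableOn hν₁).norm.const_mul _)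
    (ae_restrict_of_forall_mem measurableSet_Ioi fun s hs u _ ↦ hderiv s hs u)).2
  · rwa [integral_neg] at h
  · filter_upwards [Ioi_mem_nhds ht] with u hu
    exact (hf.integrableOn_mul_besselClifford hν (le_of_lt hu)).aestronglyMeasurable
  · refine ae_restrict_of_forall_mem measurableSet_Ioi fun s hs u hu ↦ ?_
    rw [norm_neg, mul_right_comm, norm_mul, mul_comm]
    gcongr
    exact norm_besselClifford_ofReal_le (by linarith [re_add_one_pos hν])
      (mul_nonneg (le_of_lt hu) (le_of_lt hs))

theorem hankelClifford_eq_neg_of_hasDerivAt {f' : ℝ → ℂ} (hf : RapidDecay f)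
    (hf' : RapidDecay f') (hderiv : ∀ s > (0 : ℝ), HasDerivAt f (f' s) s) (hν : -1 < ν.re)
    {t : ℝ} (ht : 0 ≤ t) : hankelClifford ν f t = -hankelClifford (ν + 1) f' t := by
  have hν₁ : -1 < (ν + 1).re := neg_one_lt_zero.trans (re_add_one_pos hν)
  have hfE := hf.mul_besselClifford (ν := ν + 1) (by linarith) ht
  have hparts := integral_Ioi_mul_deriv_eq_deriv_mul (a' := 0) (b' := 0) hderiv
    (fun s hs ↦ hasDerivAt_besselClifford_mul_cpow ν t hs)
    (by simpa only [Pi.mul_def, mul_assoc] using hf.integrableOn_mul_besselClifford hν ht)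
    (by simpa only [Pi.mul_def, mul_assoc] using hf'.integrableOn_mul_besselClifford hν₁ ht)
    (by simpa only [Pi.mul_def, mul_assoc] using
      hfE.tendsto_mul_cpow_zero (μ := ν + 1) (re_add_one_pos hν))
    (by simpa only [Pi.mul_def, mul_assoc] using hfE.tendsto_mul_cpow_atTop (ν + 1))
  simpa only [hankelClifford, mul_assoc, sub_zero, zero_sub] using hparts

theorem hankelClifford_add {g : ℝ → ℂ} (hf : RapidDecay f) (hg : RapidDecay g)
    (hν : -1 < ν.re) {t : ℝ} (ht : 0 ≤ t) :
    hankelClifford ν (fun s ↦ f s + g s) t = hankelClifford ν f t + hankelClifford ν g t := by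
  simp only [hankelClifford, add_mul]
  exact integral_add (hf.integrableOn_mul_besselClifford hν ht)
    (hg.integrableOn_mul_besselClifford hν ht)

theorem mul_hankelClifford_add_two (hf : RapidDecay f) (hν : -1 < ν.re) {t : ℝ} (ht : 0 ≤ t) :
    t * hankelClifford (ν + 2) f t =
      (ν + 1) * hankelClifford (ν + 1) f t - hankelClifford ν (fun s ↦ s * f s) t := by
  have hν₁ : -1 < (ν + 1).re := neg_one_lt_zero.trans (re_add_one_pos hν)
  simp only [hankelClifford, ← integral_const_mul]
  rw [← integral_sub ((hf.integrableOn_mul_besselClifford hν₁ ht).const_mul _)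
    (hf.ofReal_mul.integrableOn_mul_besselClifford hν ht)]
  refine setIntegral_congr_fun measurableSet_Ioi fun s hs ↦ ?_
  have hs₀ : (s : ℂ) ≠ 0 := Complex.ofReal_ne_zero.2 (ne_of_gt hs)
  simp only [besselClifford_eq_sub ν, Complex.cpow_add _ _ hs₀, Complex.cpow_one,
    Complex.cpow_ofNat]
  push_cast
  ring

end RapidDecay

theorem RapidDecay.mul_hankelClifford {f f' f'' : ℝ → ℂ} (hf : RapidDecay f)
    (hf' : RapidDecay f') (hf'' : RapidDecay f'') (hderiv : ∀ s > (0 : ℝ), HasDerivAt f (f' s) s)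
    (hderiv' : ∀ s > (0 : ℝ), HasDerivAt f' (f'' s) s) {ν : ℂ} (hν : -1 < ν.re) {t : ℝ}
    (ht : 0 ≤ t) :
    t * hankelClifford ν f t = -hankelClifford ν (fun s ↦ s * f'' s + (ν + 1) * f' s) t := by
  have hν₁ : -1 < (ν + 1).re := neg_one_lt_zero.trans (re_add_one_pos hν)
  have htwice : hankelClifford ν f t = hankelClifford (ν + 2) f'' t := by
    rw [hf.hankelClifford_eq_neg_of_hasDerivAt hf' hderiv hν ht,
      hf'.hankelClifford_eq_neg_of_hasDerivAt hf'' hderiv' hν₁ ht, neg_neg,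
      show ν + 1 + 1 = ν + 2 by ring]
  rw [htwice, hf''.mul_hankelClifford_add_two hν ht,
    hf''.ofReal_mul.hankelClifford_add (hf'.const_mul _) hν ht, hankelClifford_const_mul,
    hf'.hankelClifford_eq_neg_of_hasDerivAt hf'' hderiv' hν ht]
  ring

/-- `g k` is the `k`-th derivative of `g 0` on `(0, ∞)`, and all of these decay rapidly: the
Schwartz functions on the half-line, presented by their sequence of derivatives. -/
structure RapidDecayJet (g : ℕ → ℝ → ℂ) : Prop where
  rapidDecay : ∀ k, RapidDecay (g k)
  hasDerivAt : ∀ k, ∀ s > (0 : ℝ), HasDerivAt (g k) (g (k + 1) s) s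

/-- The successive derivatives of `s f'' + (ν + 1) f'`, when `g` are those of `f`. -/
def besselOperatorJet (ν : ℂ) (g : ℕ → ℝ → ℂ) (k : ℕ) (s : ℝ) : ℂ :=
  s * g (k + 2) s + (ν + 1 + k) * g (k + 1) s

namespace RapidDecayJet

variable {g : ℕ → ℝ → ℂ}

theorem besselOperator (hg : RapidDecayJet g) (ν : ℂ) :
    RapidDecayJet (besselOperatorJet ν g) where
  rapidDecay k := (hg.rapidDecay (k + 2)).ofReal_mul.add ((hg.rapidDecay (k + 1)).const_mul _)
  hasDerivAt k s hs := by
    convert! ((hasDerivAt_id s).ofReal_comp.mul (hg.hasDerivAt (k + 2) s hs)).add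
      ((hg.hasDerivAt (k + 1) s hs).const_mul (ν + 1 + k)) using 1
    simp only [besselOperatorJet, Nat.cast_succ, Complex.ofReal_one, id]
    ring

theorem mul_hankelClifford (hg : RapidDecayJet g) {ν : ℂ} (hν : -1 < ν.re) {t : ℝ}
    (ht : 0 ≤ t) :
    t * hankelClifford ν (g 0) t = -hankelClifford ν (besselOperatorJet ν g 0) t := by
  have hzero : besselOperatorJet ν g 0 = fun s : ℝ ↦ s * g 2 s + (ν + 1) * g 1 s :=
    funext fun s ↦ by rw [besselOperatorJet, Nat.cast_zero, add_zero]
  rw [hzero, (hg.rapidDecay 0).mul_hankelClifford (hg.rapidDecay 1) (hg.rapidDecay 2)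
    (hg.hasDerivAt 0) (hg.hasDerivAt 1) hν ht]

theorem exists_pow_mul_norm_hankelClifford_le {ν : ℂ} (hν : -1 < ν.re) (n : ℕ)
    (hg : RapidDecayJet g) :
    ∃ C, ∀ t, 0 ≤ t → t ^ n * ‖hankelClifford ν (g 0) t‖ ≤ C * (1 + t) := by
  induction n generalizing g with
  | zero => simpa using (hg.rapidDecay 0).exists_norm_hankelClifford_le hν
  | succ n ih =>
    obtain ⟨C, hC⟩ := ih (hg.besselOperator ν)
    refine ⟨C, fun t ht ↦ ?_⟩
    calc t ^ (n + 1) * ‖hankelClifford ν (g 0) t‖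
        = t ^ n * ‖t * hankelClifford ν (g 0) t‖ := by
          rw [norm_mul, Complex.norm_of_nonneg ht, pow_succ, mul_assoc]
      _ = t ^ n * ‖hankelClifford ν (besselOperatorJet ν g 0) t‖ := by
          rw [hg.mul_hankelClifford hν ht, norm_neg]
      _ ≤ C * (1 + t) := hC t ht

theorem rapidDecay_hankelClifford (hg : RapidDecayJet g) {ν : ℂ} (hν : -1 < ν.re) :
    RapidDecay (hankelClifford ν (g 0)) := by
  refine ⟨((hg.rapidDecay 0).continuousOn_hankelClifford hν).mono Ioi_subset_Ici_self,
    fun m ↦ ?_⟩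
  obtain ⟨A, hA⟩ := exists_pow_mul_norm_hankelClifford_le hν m hg
  obtain ⟨B, hB⟩ := exists_pow_mul_norm_hankelClifford_le hν (m + 1) hg
  refine ⟨A + B, fun t ht ↦ le_of_mul_le_mul_right ?_ (by positivity : 0 < 1 + t)⟩
  calc t ^ m * ‖hankelClifford ν (g 0) t‖ * (1 + t)
      = t ^ m * ‖hankelClifford ν (g 0) t‖ + t ^ (m + 1) * ‖hankelClifford ν (g 0) t‖ := by ring
    _ ≤ A * (1 + t) + B * (1 + t) := add_le_add (hA t ht.le) (hB t ht.le)
    _ = (A + B) * (1 + t) := by ring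

end RapidDecayJet

namespace RapidDecay

variable {f g : ℝ → ℂ} {ν : ℂ}

theorem integrable_hankelClifford_kernel (hf : RapidDecay f) (hg : RapidDecay g)
    (hν : -1 < ν.re) :
    Integrable (Function.uncurry fun t s : ℝ ↦
        f t * (t : ℂ) ^ ν * (g s * (s : ℂ) ^ ν) * besselClifford ν (t * s : ℝ))
      ((volume.restrict (Ioi 0)).prod (volume.restrict (Ioi 0))) := by
  obtain ⟨C, -, hC⟩ := exists_norm_besselClifford_mul_le (ν := ν) (by linarith)
  refine Integrable.mono' (((hf.mul_one_add.integrableOn hν).norm.mul_prod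
    (hg.mul_one_add.integrableOn hν).norm).const_mul C) ?_ ?_
  · have hE : Continuous fun p : ℝ × ℝ ↦ besselClifford ν (p.1 * p.2 : ℝ) :=
      (continuous_besselClifford ν).comp (by fun_prop)
    exact ((hf.integrableOn hν).mul_prod (hg.integrableOn hν)).aestronglyMeasurable.mul
      hE.aestronglyMeasurable
  · rw [Measure.prod_restrict]
    refine ae_restrict_of_forall_mem (measurableSet_Ioi.prod measurableSet_Ioi) ?_
    rintro ⟨t, s⟩ ⟨ht, hs⟩
    have ht₀ : 0 ≤ t := le_of_lt ht
    have hs₀ : 0 ≤ s := le_of_lt hs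
    simp only [Function.uncurry, norm_mul, norm_one_add_ofReal ht₀, norm_one_add_ofReal hs₀]
    calc ‖f t‖ * ‖(t : ℂ) ^ ν‖ * (‖g s‖ * ‖(s : ℂ) ^ ν‖) * ‖besselClifford ν (t * s : ℝ)‖
        ≤ ‖f t‖ * ‖(t : ℂ) ^ ν‖ * (‖g s‖ * ‖(s : ℂ) ^ ν‖) * (C * (1 + t) * (1 + s)) := by
          gcongr; exact hC t s ht₀ hs₀
      _ = C * (‖f t‖ * (1 + t) * ‖(t : ℂ) ^ ν‖ * (‖g s‖ * (1 + s) * ‖(s : ℂ) ^ ν‖)) := by ring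

theorem integral_mul_hankelClifford_comm (hf : RapidDecay f) (hg : RapidDecay g)
    (hν : -1 < ν.re) :
    ∫ t in Ioi (0 : ℝ), f t * hankelClifford ν g t * (t : ℂ) ^ ν =
      ∫ s in Ioi (0 : ℝ), g s * hankelClifford ν f s * (s : ℂ) ^ ν := by
  have hswap := integral_integral_swap (hf.integrable_hankelClifford_kernel hg hν)
  simp only [hankelClifford, ← integral_const_mul, ← integral_mul_const]
  convert! hswap using 5
  · ring
  · rw [mul_comm (_ : ℝ)]; ring

end RapidDecay

theorem RapidDecay.add_one_mul_integral_mul_cpow {f f' : ℝ → ℂ} (hf : RapidDecay f)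
    (hf' : RapidDecay f') (hderiv : ∀ s > (0 : ℝ), HasDerivAt f (f' s) s) {ν : ℂ}
    (hν : -1 < ν.re) :
    (ν + 1) * ∫ s in Ioi (0 : ℝ), f s * (s : ℂ) ^ ν =
      -∫ s in Ioi (0 : ℝ), f' s * (s : ℂ) ^ (ν + 1) := by
  have hpos : 0 < (ν + 1).re := re_add_one_pos hν
  have hne : ν + 1 ≠ 0 := by rintro h; simp [h] at hpos
  have hΓ : Complex.Gamma (ν + 1) ≠ 0 := Complex.Gamma_ne_zero_of_re_pos hpos
  have hparts := hf.hankelClifford_eq_neg_of_hasDerivAt hf' hderiv hν le_rfl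
  rw [hankelClifford_zero, hankelClifford_zero, Complex.Gamma_add_one _ hne] at hparts
  field_simp at hparts
  exact hparts

theorem hasDerivAt_cexp_neg_mul_ofReal (a : ℂ) (s : ℝ) :
    HasDerivAt (fun s : ℝ ↦ Complex.exp (-(a * s))) (-a * Complex.exp (-(a * s))) s := by
  simpa [mul_comm] using ((hasDerivAt_id (s : ℂ)).const_mul (-a)).cexp.comp_ofReal

theorem hasDerivAt_integral_cexp_mul_cpow {ν : ℂ} (hν : -1 < ν.re) {a : ℂ} (ha : 0 < a.re) :
    HasDerivAt (fun a : ℂ ↦ ∫ s in Ioi (0 : ℝ), Complex.exp (-(a * s)) * (s : ℂ) ^ ν)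
      (-∫ s in Ioi (0 : ℝ), Complex.exp (-(a * s)) * (s : ℂ) ^ (ν + 1)) a := by
  have hν₁ : -1 < (ν + 1).re := neg_one_lt_zero.trans (re_add_one_pos hν)
  have hhalf : 0 < ((a.re / 2 : ℝ) : ℂ).re := by simpa using ha
  have hnhds : {b : ℂ | a.re / 2 < b.re} ∈ nhds a :=
    (isOpen_lt continuous_const Complex.continuous_re).mem_nhds (half_lt_self ha)
  have h := (hasDerivAt_integral_of_dominated_loc_of_deriv_le (μ := volume.restrict (Ioi 0))
    (F := fun (b : ℂ) (s : ℝ) ↦ Complex.exp (-(b * s)) * (s : ℂ) ^ ν)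
    (F' := fun (b : ℂ) (s : ℝ) ↦ -(Complex.exp (-(b * s)) * (s : ℂ) ^ (ν + 1)))
    (bound := fun s : ℝ ↦ ‖Complex.exp (-((a.re / 2 : ℝ) * s)) * (s : ℂ) ^ (ν + 1)‖)
    hnhds ?_ ((rapidDecay_cexp ha).integrableOn hν)
    ((rapidDecay_cexp ha).integrableOn hν₁).neg.aestronglyMeasurable
    (ae_restrict_of_forall_mem measurableSet_Ioi fun s hs b hb ↦ ?_)
    ((rapidDecay_cexp hhalf).integrableOn hν₁).norm
    (ae_restrict_of_forall_mem measurableSet_Ioi fun s hs b _ ↦ ?_)).2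
  · rwa [integral_neg] at h
  · filter_upwards [hnhds] with b hb
    exact ((rapidDecay_cexp ((half_pos ha).trans hb)).integrableOn hν).aestronglyMeasurable
  · have hre : (-(b * s)).re ≤ (-((a.re / 2 : ℝ) * s : ℂ)).re := by
      simpa using mul_le_mul_of_nonneg_right (le_of_lt hb) (le_of_lt hs)
    simp only [norm_neg, norm_mul, Complex.norm_exp]
    gcongr
  · convert! (((hasDerivAt_id b).mul_const (s : ℂ)).neg.cexp).mul_const ((s : ℂ) ^ ν) using 1
    rw [Complex.cpow_add _ _ (Complex.ofReal_ne_zero.2 (ne_of_gt hs)), Complex.cpow_one]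
    simp only [Pi.neg_apply, id]
    ring

theorem integral_cexp_mul_cpow {ν : ℂ} (hν : -1 < ν.re) {a : ℂ} (ha : 0 < a.re) :
    ∫ s in Ioi (0 : ℝ), Complex.exp (-(a * s)) * (s : ℂ) ^ ν =
      a ^ (-(ν + 1)) * Complex.Gamma (ν + 1) := by
  let L (μ b : ℂ) : ℂ := ∫ s in Ioi (0 : ℝ), Complex.exp (-(b * s)) * (s : ℂ) ^ μ
  have hrec : ∀ b : ℂ, 0 < b.re → (ν + 1) * L ν b = b * L (ν + 1) b := fun b hb ↦ by
    have h := (rapidDecay_cexp hb).add_one_mul_integral_mul_cpow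
      ((rapidDecay_cexp hb).const_mul (-b)) (fun s _ ↦ hasDerivAt_cexp_neg_mul_ofReal b s) hν
    simpa only [mul_assoc, neg_mul, integral_neg, integral_const_mul, neg_neg] using h
  have hderiv : ∀ b : ℂ, 0 < b.re → HasDerivAt (fun b ↦ b ^ (ν + 1) * L ν b) 0 b := by
    intro b hb
    convert! ((hasDerivAt_id b).cpow_const (c := ν + 1) (Or.inl hb)).mul
      (hasDerivAt_integral_cexp_mul_cpow hν hb) using 1
    have hb₀ : b ≠ 0 := by rintro rfl; simp at hb
    simp only [id, add_sub_cancel_right, mul_one, Complex.cpow_add _ _ hb₀, Complex.cpow_one]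
    linear_combination -b ^ ν * hrec b hb
  have hone : L ν 1 = Complex.Gamma (ν + 1) := by
    have h := Complex.integral_cpow_mul_exp_neg_mul_Ioi (a := ν + 1) (r := 1)
      (re_add_one_pos hν) one_pos
    simpa [L, mul_comm] using h
  have hconst : a ^ (ν + 1) * L ν a = 1 ^ (ν + 1) * L ν 1 :=
    (isOpen_lt continuous_const Complex.continuous_re).is_const_of_deriv_eq_zero
      (convex_halfSpace_re_gt 0).isPreconnected
      (fun b hb ↦ (hderiv b hb).differentiableAt.differentiableWithinAt)
      (fun b hb ↦ (hderiv b hb).deriv) ha (by simp)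
  rw [Complex.one_cpow, one_mul, hone] at hconst
  have ha₀ : a ≠ 0 := by rintro rfl; simp at ha
  rw [← hconst, ← mul_assoc, ← Complex.cpow_add _ _ ha₀, neg_add_cancel, Complex.cpow_zero, one_mul]

theorem eq_of_hasDerivAt_zero_of_continuousOn_Ici {E : Type*} [NormedAddCommGroup E]
    [NormedSpace ℝ E] {F : ℝ → E} {a : ℝ} (hcont : ContinuousOn F (Ici a))
    (hderiv : ∀ t > a, HasDerivAt F 0 t) {t : ℝ} (ht : a ≤ t) : F t = F a := by
  have hconst : EqOn F (fun _ ↦ F (a + 1)) (Ioi a) := fun u hu ↦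
    isOpen_Ioi.is_const_of_deriv_eq_zero isPreconnected_Ioi
      (fun v hv ↦ (hderiv v hv).differentiableAt.differentiableWithinAt)
      (fun v hv ↦ (hderiv v hv).deriv) hu (lt_add_one a)
  have hclosure := hconst.of_subset_closure hcont continuousOn_const Ioi_subset_Ici_self
    (closure_Ioi a).ge
  exact (hclosure ht).trans (hclosure self_mem_Ici).symm

theorem hasDerivAt_hankelClifford_cexp {ν : ℂ} (hν : -1 < ν.re) {a : ℂ} (ha : 0 < a.re) {t : ℝ}
    (ht : 0 < t) :
    HasDerivAt (hankelClifford ν fun s : ℝ ↦ Complex.exp (-(a * s)))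
      (-(a⁻¹ * hankelClifford ν (fun s : ℝ ↦ Complex.exp (-(a * s))) t)) t := by
  have ha₀ : a ≠ 0 := by rintro rfl; simp at ha
  have hexp := rapidDecay_cexp ha
  have hparts := hexp.hankelClifford_eq_neg_of_hasDerivAt (hexp.const_mul (-a))
    (fun s _ ↦ hasDerivAt_cexp_neg_mul_ofReal a s) hν ht.le
  rw [hankelClifford_const_mul, neg_mul, neg_neg] at hparts
  rw [hparts, inv_mul_cancel_left₀ ha₀]
  exact hexp.hasDerivAt_hankelClifford hν ht

theorem hankelClifford_cexp {ν : ℂ} (hν : -1 < ν.re) {a : ℂ} (ha : 0 < a.re) {t : ℝ}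
    (ht : 0 ≤ t) :
    hankelClifford ν (fun s : ℝ ↦ Complex.exp (-(a * s))) t =
      a ^ (-(ν + 1)) * Complex.exp (-(a⁻¹ * t)) := by
  set T := hankelClifford ν fun s : ℝ ↦ Complex.exp (-(a * s)) with hT
  have hderiv : ∀ u > (0 : ℝ), HasDerivAt (fun u : ℝ ↦ T u * Complex.exp (-(-a⁻¹ * u))) 0 u :=
    fun u hu ↦ by
      convert! (hasDerivAt_hankelClifford_cexp hν ha hu).mul
        (hasDerivAt_cexp_neg_mul_ofReal (-a⁻¹) u) using 1
      ring
  have hconst : T t * Complex.exp (-(-a⁻¹ * t)) = T 0 * Complex.exp (-(-a⁻¹ * (0 : ℝ))) :=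
    eq_of_hasDerivAt_zero_of_continuousOn_Ici
      (((rapidDecay_cexp ha).continuousOn_hankelClifford hν).mul (by fun_prop)) hderiv ht
  have hzero : T 0 = a ^ (-(ν + 1)) := by
    have hΓ := Complex.Gamma_ne_zero_of_re_pos (s := ν + 1) (re_add_one_pos hν)
    rw [hT, hankelClifford_zero, integral_cexp_mul_cpow hν ha]
    field_simp
  rw [Complex.ofReal_zero, mul_zero, neg_zero, Complex.exp_zero, mul_one, hzero] at hconst
  rw [← hconst, mul_assoc, ← Complex.exp_add]
  simp

theorem eq_zero_of_integral_cexp_smul_eq_zero {E : Type*} [NormedAddCommGroup E]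
    [NormedSpace ℂ E] [CompleteSpace E] {h : ℝ → E} {σ : ℝ} (hcont : ContinuousOn h (Ioi 0))
    (hint : IntegrableOn (fun s : ℝ ↦ Complex.exp (-(σ * s)) • h s) (Ioi 0))
    (hzero : ∀ a : ℂ, a.re = σ → ∫ s in Ioi (0 : ℝ), Complex.exp (-(a * s)) • h s = 0)
    {x : ℝ} (hx : 0 < x) : h x = 0 := by
  let G : ℝ → E := (Ioi (0 : ℝ)).indicator fun s : ℝ ↦ Complex.exp (-(σ * s)) • h s
  have hG : Integrable G := hint.integrable_indicator measurableSet_Ioi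
  have hfourier : FourierTransform.fourier G = 0 := by
    funext w
    rw [Real.fourier_real_eq_integral_exp_smul, Pi.zero_apply,
      ← hzero (σ + 2 * Real.pi * w * Complex.I) (by simp), ← integral_indicator measurableSet_Ioi]
    congr 1 with s
    by_cases hs : s ∈ Ioi (0 : ℝ)
    · simp only [G, indicator_of_mem hs]
      rw [smul_smul, ← Complex.exp_add]
      congr 2
      push_cast
      ring
    · simp only [G, indicator_of_notMem hs, smul_zero]
  have hGcont : ContinuousAt G x := by
    have hfactor : ContinuousAt (fun s : ℝ ↦ Complex.exp (-(σ * s)) • h s) x :=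
      ContinuousAt.smul (by fun_prop) (hcont.continuousAt (Ioi_mem_nhds hx))
    exact hfactor.congr (eqOn_indicator.eventuallyEq_of_mem (Ioi_mem_nhds hx)).symm
  have hinv := hG.fourierInv_fourier_eq (by rw [hfourier]; exact integrable_zero _ _ _) hGcont
  rw [hfourier, Real.fourierInv_eq] at hinv
  simpa [G, indicator_of_mem (mem_Ioi.2 hx), eq_comm] using hinv

theorem integrableOn_cexp_mul {g : ℝ → ℂ} {ν a : ℂ} (hcont : ContinuousOn g (Ioi 0)) {C : ℝ}
    (hC : ∀ s > (0 : ℝ), ‖g s‖ ≤ C * (1 + s)) (hν : -1 < ν.re) (ha : 0 < a.re) :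
    IntegrableOn (fun s : ℝ ↦ Complex.exp (-(a * s)) * g s * (s : ℂ) ^ ν) (Ioi 0) :=
  ((rapidDecay_cexp ha).mul_of_norm_le hcont hC).integrableOn hν

namespace RapidDecay

variable {f : ℝ → ℂ} {ν a : ℂ}

theorem integral_cexp_mul_hankelClifford (hf : RapidDecay f) (hν : -1 < ν.re) (ha : 0 < a.re) :
    ∫ s in Ioi (0 : ℝ), Complex.exp (-(a * s)) * hankelClifford ν f s * (s : ℂ) ^ ν =
      a ^ (-(ν + 1)) * ∫ s in Ioi (0 : ℝ), Complex.exp (-(a⁻¹ * s)) * f s * (s : ℂ) ^ ν := by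
  rw [(rapidDecay_cexp ha).integral_mul_hankelClifford_comm hf hν, ← integral_const_mul]
  refine setIntegral_congr_fun measurableSet_Ioi fun s hs ↦ ?_
  simp only [hankelClifford_cexp hν ha (le_of_lt hs)]
  ring

theorem integral_cexp_mul_hankelClifford_hankelClifford (hf : RapidDecay f)
    (hTf : RapidDecay (hankelClifford ν f)) (hν : -1 < ν.re) (ha : 0 < a.re) :
    ∫ s in Ioi (0 : ℝ),
        Complex.exp (-(a * s)) * hankelClifford ν (hankelClifford ν f) s * (s : ℂ) ^ ν =
      ∫ s in Ioi (0 : ℝ), Complex.exp (-(a * s)) * f s * (s : ℂ) ^ ν := by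
  have ha₀ : a ≠ 0 := by rintro rfl; simp at ha
  have hinv : 0 < a⁻¹.re := by
    rw [Complex.inv_re]; exact div_pos ha (Complex.normSq_pos.2 ha₀)
  have harg : a.arg ≠ Real.pi := (Complex.mem_slitPlane_iff_arg.1 (Or.inl ha)).1
  rw [hTf.integral_cexp_mul_hankelClifford hν ha, hf.integral_cexp_mul_hankelClifford hν hinv,
    inv_inv, Complex.inv_cpow _ _ harg, ← mul_assoc, mul_inv_cancel₀, one_mul]
  simp [Complex.cpow_eq_zero_iff, ha₀]

theorem exists_norm_le_mul_one_add (hf : RapidDecay f) :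
    ∃ C, ∀ s > (0 : ℝ), ‖f s‖ ≤ C * (1 + s) := by
  obtain ⟨C, hC⟩ := hf.bound 0
  refine ⟨C, fun s hs ↦ ?_⟩
  have hle : ‖f s‖ ≤ C := by simpa using hC s hs
  exact hle.trans (le_mul_of_one_le_right ((norm_nonneg _).trans hle) (by linarith))

theorem hankelClifford_hankelClifford (hf : RapidDecay f)
    (hTf : RapidDecay (hankelClifford ν f)) (hν : -1 < ν.re) {x : ℝ} (hx : 0 < x) :
    hankelClifford ν (hankelClifford ν f) x = f x := by
  set F := hankelClifford ν (hankelClifford ν f) with hF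
  obtain ⟨A, hA⟩ := hTf.exists_norm_hankelClifford_le hν
  obtain ⟨B, hB⟩ := hf.exists_norm_le_mul_one_add
  have hFcont : ContinuousOn F (Ioi 0) :=
    (hTf.continuousOn_hankelClifford hν).mono Ioi_subset_Ici_self
  have hFint (a : ℂ) (ha : 0 < a.re) := integrableOn_cexp_mul hFcont (fun s hs ↦ hA s hs.le) hν ha
  have hfint (a : ℂ) (ha : 0 < a.re) := integrableOn_cexp_mul hf.continuousOn hB hν ha
  have hsplit (a : ℂ) (s : ℝ) : Complex.exp (-(a * s)) • ((F s - f s) * (s : ℂ) ^ ν) =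
      Complex.exp (-(a * s)) * F s * (s : ℂ) ^ ν - Complex.exp (-(a * s)) * f s * (s : ℂ) ^ ν := by
    rw [smul_eq_mul]; ring
  have hcont : ContinuousOn (fun s : ℝ ↦ (F s - f s) * (s : ℂ) ^ ν) (Ioi 0) :=
    (hFcont.sub hf.continuousOn).mul fun s hs ↦
      (Complex.continuousAt_ofReal_cpow_const s ν (Or.inr (ne_of_gt hs))).continuousWithinAt
  have hzero : (F x - f x) * (x : ℂ) ^ ν = 0 := by
    refine eq_zero_of_integral_cexp_smul_eq_zero (σ := 1) hcont ?_ (fun a ha ↦ ?_) hx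
    · simp only [hsplit]
      exact (hFint _ (by simp)).sub (hfint _ (by simp))
    · have ha₀ : 0 < a.re := ha ▸ one_pos
      simp only [hsplit]
      rw [integral_sub (hFint a ha₀) (hfint a ha₀), hF,
        hf.integral_cexp_mul_hankelClifford_hankelClifford hTf hν ha₀, sub_self]
  have hx₀ : (x : ℂ) ^ ν ≠ 0 := by simp [Complex.cpow_eq_zero_iff, hx.ne']
  exact sub_eq_zero.1 ((mul_eq_zero_iff_right hx₀).1 hzero)

end RapidDecay

theorem besselJ_eq_mul_besselClifford (ν : ℂ) {z : ℝ} (hz : 0 < z) :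
    besselJ ν z = ((z : ℂ) / 2) ^ ν * besselClifford ν (z ^ 2 / 4 : ℝ) := by
  have hz₀ : (z : ℂ) / 2 ≠ 0 := by simp [hz.ne']
  rw [besselJ, besselClifford, ← tsum_mul_left]
  refine tsum_congr fun k ↦ ?_
  have hpow : ((z : ℂ) / 2) ^ (2 * (k : ℂ)) = ((z ^ 2 / 4 : ℝ) : ℂ) ^ k := by
    rw [Complex.cpow_ofNat_mul, Complex.cpow_natCast, pow_right_comm]
    push_cast
    rw [div_pow]
    norm_num
  rw [Complex.cpow_add _ _ hz₀, hpow, besselCliffordCoeff]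
  ring

theorem cpow_neg_mul_besselJ_mul_cpow (ν : ℂ) {x y : ℝ} (hx : 0 < x) (hy : 0 < y) :
    (x : ℂ) ^ (-ν) * (besselJ ν (x * y) * (y : ℂ) ^ (ν + 1)) =
      y * (besselClifford ν (x ^ 2 / 2 * (y ^ 2 / 2) : ℝ) * ((y ^ 2 / 2 : ℝ) : ℂ) ^ ν) := by
  have hxν : (x : ℂ) ^ ν ≠ 0 := by simp [Complex.cpow_eq_zero_iff, hx.ne']
  have hJ : ((x * y : ℝ) / 2 : ℂ) ^ ν = (x : ℂ) ^ ν * ((y / 2 : ℝ) : ℂ) ^ ν := by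
    rw [← Complex.mul_cpow_ofReal_nonneg hx.le (by positivity)]
    push_cast
    ring_nf
  have hmeasure : ((y ^ 2 / 2 : ℝ) : ℂ) ^ ν = (y : ℂ) ^ ν * ((y / 2 : ℝ) : ℂ) ^ ν := by
    rw [← Complex.mul_cpow_ofReal_nonneg hy.le (by positivity)]
    push_cast
    ring_nf
  rw [besselJ_eq_mul_besselClifford ν (mul_pos hx hy), hJ, hmeasure, Complex.cpow_neg,
    Complex.cpow_add _ _ (Complex.ofReal_ne_zero.2 hy.ne'), Complex.cpow_one,
    show (x * y) ^ 2 / 4 = x ^ 2 / 2 * (y ^ 2 / 2) by ring]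
  field_simp

theorem integral_Ioi_smul_comp_sq_div_two {E : Type*} [NormedAddCommGroup E] [NormedSpace ℝ E]
    (g : ℝ → E) : ∫ y in Ioi (0 : ℝ), y • g (y ^ 2 / 2) = ∫ s in Ioi (0 : ℝ), g s := by
  calc ∫ y in Ioi (0 : ℝ), y • g (y ^ 2 / 2)
      = ∫ y in Ioi (0 : ℝ), (2 * y ^ ((2 : ℝ) - 1)) • (2 : ℝ)⁻¹ • g (2⁻¹ * y ^ (2 : ℝ)) := by
        congr 1 with y
        rw [smul_smul, show (2 : ℝ) - 1 = 1 by norm_num, Real.rpow_one, Real.rpow_two,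
          div_eq_inv_mul]
        ring_nf
    _ = ∫ u in Ioi (0 : ℝ), (2 : ℝ)⁻¹ • g (2⁻¹ * u) :=
        integral_comp_rpow_Ioi_of_pos (g := fun u ↦ (2 : ℝ)⁻¹ • g (2⁻¹ * u)) two_pos
    _ = ∫ s in Ioi (0 : ℝ), g s := by
        rw [integral_smul, integral_comp_mul_left_Ioi' g 0 (inv_pos.2 two_pos), mul_zero]

theorem hankel_eq_hankelClifford (ν : ℂ) (φ : ℝ → ℂ) {x : ℝ} (hx : 0 < x) :
    hankel ν φ x = hankelClifford ν (fun s ↦ φ (√(2 * s))) (x ^ 2 / 2) := by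
  rw [hankel, ← integral_const_mul]
  refine .trans ?_ (integral_Ioi_smul_comp_sq_div_two _)
  refine setIntegral_congr_fun measurableSet_Ioi fun y hy ↦ ?_
  have hsqrt : √(2 * (y ^ 2 / 2)) = y := by
    rw [mul_div_cancel₀ _ two_ne_zero, Real.sqrt_sq (le_of_lt hy)]
  simp only [hsqrt, Complex.real_smul]
  linear_combination φ y * cpow_neg_mul_besselJ_mul_cpow ν hx hy

theorem contDiffOn_DIter {φ : ℝ → ℂ} (hφ : ContDiffOn ℝ (⊤ : ℕ∞) φ (Ioi 0)) (k : ℕ) :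
    ContDiffOn ℝ (⊤ : ℕ∞) (DIter k φ) (Ioi 0) := by
  induction k with
  | zero => exact hφ
  | succ k ih =>
    have hinv : ContDiffOn ℝ (⊤ : ℕ∞) (fun x : ℝ ↦ 1 / (x : ℂ)) (Ioi 0) := by
      simp only [one_div]
      exact Complex.ofRealCLM.contDiff.contDiffOn.fun_inv fun x hx ↦
        Complex.ofReal_ne_zero.2 (ne_of_gt hx)
    exact hinv.mul (ih.deriv_of_isOpen isOpen_Ioi (by simp))

theorem hasDerivAt_DIter_comp_sqrt {φ : ℝ → ℂ} (hφ : ContDiffOn ℝ (⊤ : ℕ∞) φ (Ioi 0)) (k : ℕ)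
    {s : ℝ} (hs : 0 < s) :
    HasDerivAt (fun s ↦ DIter k φ (√(2 * s))) (DIter (k + 1) φ (√(2 * s))) s := by
  have hpos : 0 < √(2 * s) := Real.sqrt_pos.2 (by positivity)
  have hDIter : HasDerivAt (DIter k φ) (deriv (DIter k φ) (√(2 * s))) (√(2 * s)) :=
    (((contDiffOn_DIter hφ k).differentiableOn (by simp)).differentiableAt
      (Ioi_mem_nhds hpos)).hasDerivAt
  have hsqrt : HasDerivAt (fun s : ℝ ↦ √(2 * s)) (1 / √(2 * s)) s := by
    convert! (hasDerivAt_const_mul (2 : ℝ)).sqrt (by positivity : 2 * s ≠ 0) using 1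
    field_simp
  convert! hDIter.scomp s hsqrt using 1
  simp [DIter]

theorem SPlus.rapidDecayJet {φ : ℝ → ℂ} (hφ : SPlus φ) :
    RapidDecayJet fun k s ↦ DIter k φ (√(2 * s)) where
  hasDerivAt k _ hs := hasDerivAt_DIter_comp_sqrt hφ.1 k hs
  rapidDecay k := by
    refine ⟨fun s hs ↦
      (hasDerivAt_DIter_comp_sqrt hφ.1 k hs).continuousAt.continuousWithinAt, fun m ↦ ?_⟩
    obtain ⟨C, hC⟩ := hφ.2 (2 * m) k
    refine ⟨C, fun s hs ↦ le_trans ?_ (hC _ (Real.sqrt_pos.2 (by positivity : 0 < 2 * s)))⟩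
    rw [norm_mul, norm_pow, Complex.norm_real, Real.norm_of_nonneg (Real.sqrt_nonneg _), pow_mul,
      Real.sq_sqrt (by positivity)]
    gcongr
    linarith

/-- Inversion formula for the modified Hankel transform: for `Re ν > -1` and `φ ∈ 𝒮⁺`,
`𝓗_ν(𝓗_ν(φ))(x) = φ(x)` for every `x > 0`. -/
theorem hankel_inversion (ν : ℂ) (hν : -1 < ν.re) (φ : ℝ → ℂ) (hφ : SPlus φ) :
    ∀ x > (0:ℝ), hankel ν (hankel ν φ) x = φ x := by
  intro x hx
  have hjet := hφ.rapidDecayJet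
  have hinner : EqOn (fun t ↦ hankel ν φ (√(2 * t)))
      (hankelClifford ν fun s ↦ φ (√(2 * s))) (Ioi 0) := fun t ht ↦ by
    have hpos : 0 < 2 * t := mul_pos two_pos ht
    simp only [hankel_eq_hankelClifford ν φ (Real.sqrt_pos.2 hpos), Real.sq_sqrt hpos.le,
      mul_div_cancel_left₀ t two_ne_zero]
  calc hankel ν (hankel ν φ) x
      = hankelClifford ν (hankelClifford ν fun s ↦ φ (√(2 * s))) (x ^ 2 / 2) := by
        rw [hankel_eq_hankelClifford ν _ hx, hankelClifford_congr hinner]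
    _ = φ (√(2 * (x ^ 2 / 2))) :=
        (hjet.rapidDecay 0).hankelClifford_hankelClifford (hjet.rapidDecay_hankelClifford hν) hν
          (by positivity)
    _ = φ x := by rw [mul_div_cancel₀ _ two_ne_zero, Real.sqrt_sq hx.le]
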